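/- arXiv:1605.00978 — 2 statements merged into one kernel-verified Lean document; each statement's English description precedes it below -/
import Mathlib

section
/- Let 𝓜_0 be a standard module and let g ∈ G∖D_{𝓜_0} be a gap such that every gap g' ∈ G with g' > g belongs to D_{𝓜_0}. Then for every h ∈ 𝒪 with ν(h) = g, the module 𝓜_1 := 𝓜_0 + ℛh equals 𝓜_0 ⊕ ℂh and is a standard module with Δ_{𝓜_1} = Δ_{𝓜_0} ∪ {g}, i.e. D_{𝓜_1} = D_{𝓜_0} ∪ {g}. -/
open PowerSeries

noncomputable section

/-- `𝒪 = ℂ⟦z⟧`, the ring of formal power series over `ℂ`. -/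
abbrev 𝒪 : Type := PowerSeries ℂ

/-- `ν(f)`: the order of a power series (least `n` with nonzero coefficient);
only meaningful for `f ≠ 0`. -/
noncomputable def ord (f : 𝒪) : ℕ := sInf {n : ℕ | PowerSeries.coeff n f ≠ 0}

/-- The value semigroup `Γ = {ν(x) : 0 ≠ x ∈ ℛ}` of a subalgebra `ℛ ⊆ 𝒪`. -/
def SGamma (R : Subalgebra ℂ 𝒪) : Set ℕ := {n | ∃ x ∈ R, x ≠ (0:𝒪) ∧ ord x = n}

/-- The set of gaps `G = ℕ ∖ Γ`. -/
def Gaps (R : Subalgebra ℂ 𝒪) : Set ℕ := (SGamma R)ᶜ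

/-- `Δ` is a `Γ`-module: `Γ + Δ ⊆ Δ`. -/
def IsGammaModule (Γ Δ : Set ℕ) : Prop := ∀ a ∈ Γ, ∀ d ∈ Δ, a + d ∈ Δ

/-- `Δ_𝓜 = {ν(x) : 0 ≠ x ∈ 𝓜}` for an `ℛ`-submodule `𝓜 ⊆ 𝒪`. -/
def DeltaM (R : Subalgebra ℂ 𝒪) (M : Submodule ↥R 𝒪) : Set ℕ :=
  {n | ∃ x ∈ M, x ≠ (0:𝒪) ∧ ord x = n}

/-- `D_𝓜 = Δ_𝓜 ∩ G`, the set of added gaps. -/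
def Dset (R : Subalgebra ℂ 𝒪) (M : Submodule ↥R 𝒪) : Set ℕ := DeltaM R M ∩ Gaps R

/-- A standard module: a finitely generated `ℛ`-submodule of `𝒪` containing an
element of order `0`. -/
def IsStd (R : Subalgebra ℂ 𝒪) (M : Submodule ↥R 𝒪) : Prop :=
  M.FG ∧ ∃ x ∈ M, x ≠ (0:𝒪) ∧ ord x = 0

/-- `c ≥ 1` is the conductor of `ℛ`: the minimal exponent with `z^c𝒪 ⊆ ℛ`. -/
def HasConductor (R : Subalgebra ℂ 𝒪) (c : ℕ) : Prop :=
  1 ≤ c ∧ (∀ f : 𝒪, (PowerSeries.X : 𝒪)^c * f ∈ R) ∧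
    ∀ c' : ℕ, (∀ f : 𝒪, (PowerSeries.X : 𝒪)^c' * f ∈ R) → c ≤ c'

/-- `z^j𝒪` as a `ℂ`-submodule of `𝒪`. -/
def zO (j : ℕ) : Submodule ℂ 𝒪 :=
  LinearMap.range (LinearMap.mulLeft ℂ ((PowerSeries.X : 𝒪)^j))

/-- `𝔪𝓜` as a `ℂ`-submodule of `𝒪`, where `𝔪 = {x ∈ ℛ : x = 0 or ν(x) > 0}`
is the maximal ideal of `ℛ`. -/
def mSmul (R : Subalgebra ℂ 𝒪) (M : Submodule ↥R 𝒪) : Submodule ℂ 𝒪 :=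
  Submodule.span ℂ {z : 𝒪 | ∃ r ∈ (R : Set 𝒪), ∃ y ∈ M, (r = 0 ∨ 0 < ord r) ∧ z = r * y}

/-- `dim_ℂ (A / B)` for `ℂ`-subspaces; intended for `B ≤ A`. -/
noncomputable def quotDim (A B : Submodule ℂ 𝒪) : ℕ :=
  Module.finrank ℂ (↥A ⧸ Submodule.comap A.subtype B)

/-- `D_i = D_0 ∪ {g_1, …, g_i}` (the gaps `g` are indexed by `1, …, m`). -/
def DFlagSet (D0 : Set ℕ) (g : ℕ → ℕ) (i : ℕ) : Set ℕ := D0 ∪ g '' Set.Icc 1 i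

/-- `(D_0, …, D_m)` with `D_i = D_0 ∪ {g_1 < … < g_i}` is a `D`-flag:
all `Δ_i = Γ ∪ D_i` are `Γ`-modules. -/
def IsDFlag (R : Subalgebra ℂ 𝒪) (m : ℕ) (D0 : Set ℕ) (g : ℕ → ℕ) : Prop :=
  D0 ⊆ Gaps R ∧ StrictMonoOn g (Set.Icc 1 m) ∧
  (∀ i, 1 ≤ i → i ≤ m → g i ∈ Gaps R \ D0) ∧
  (∀ i ≤ m, IsGammaModule (SGamma R) (SGamma R ∪ DFlagSet D0 g i))

/-- A `D`-flag is admissible if it is realized by a flag of standard modules. -/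
def IsAdmissibleFlag (R : Subalgebra ℂ 𝒪) (m : ℕ) (D0 : Set ℕ) (g : ℕ → ℕ) : Prop :=
  ∃ MM : ℕ → Submodule ↥R 𝒪, (∀ i, i < m → MM i ≤ MM (i+1)) ∧
    ∀ i ≤ m, IsStd R (MM i) ∧ Dset R (MM i) = DFlagSet D0 g i

/-- The subalgebra `ℂ[z^a, z^b + z^c] + z^N ℂ⟦z⟧` of `𝒪`. -/
def Rring (a b c N : ℕ) : Subalgebra ℂ 𝒪 where
  carrier := {f : 𝒪 | ∃ p ∈ Algebra.adjoin ℂ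
      ({(PowerSeries.X : 𝒪)^a, (PowerSeries.X : 𝒪)^b + (PowerSeries.X : 𝒪)^c} : Set 𝒪),
    ∃ g : 𝒪, f = p + (PowerSeries.X : 𝒪)^N * g}
  mul_mem' := by
    rintro x y ⟨p, hp, gx, rfl⟩ ⟨q, hq, gy, rfl⟩
    exact ⟨p * q, mul_mem hp hq,
      p * gy + gx * q + (PowerSeries.X : 𝒪)^N * (gx * gy), by ring⟩
  one_mem' := ⟨1, one_mem _, 0, by ring⟩
  add_mem' := by
    rintro x y ⟨p, hp, gx, rfl⟩ ⟨q, hq, gy, rfl⟩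
    exact ⟨p + q, add_mem hp hq, gx + gy, by ring⟩
  zero_mem' := ⟨0, zero_mem _, 0, by ring⟩
  algebraMap_mem' := fun r => ⟨algebraMap ℂ 𝒪 r, Subalgebra.algebraMap_mem _ r, 0, by ring⟩

/-- The ring `ℂ⟦z^4, z^{2u}+z^v⟧ = ℂ[z^4, z^{2u}+z^v] + z^{4u+v}ℂ⟦z⟧` for the
plane curve singularity with Puiseux exponents `(4, 2u, v)`. -/
def Rcal (u v : ℕ) : Subalgebra ℂ 𝒪 := Rring 4 (2*u) v (4*u+v)

/-- The gap counting function `γ_Δ(ℓ) = |[ℓ,∞) ∖ Δ|`. -/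
noncomputable def gapCount (Δ : Set ℕ) (ℓ : ℕ) : ℕ := Set.ncard {k : ℕ | ℓ ≤ k ∧ k ∉ Δ}

/-- `n = n(D)`: the smallest odd number in `(Δ ∪ {v}) ∩ [2u, ∞)`. -/
noncomputable def nOdd (u v : ℕ) (Δ : Set ℕ) : ℕ :=
  sInf {k : ℕ | Odd k ∧ 2*u ≤ k ∧ (k ∈ Δ ∨ k = v)}

/-- The dimension change `μ_{D,g}` of Theorem `dimprop` (for the family `(4,2u,v)`),
where `Γ` is the value semigroup. -/
noncomputable def muDim (u v : ℕ) (Γ : Set ℕ) (D : Set ℕ) (gp : ℕ) : ℕ :=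
  let Δ : Set ℕ := Γ ∪ D
  let Δ' : Set ℕ := Δ ∪ {gp}
  let n : ℕ := nOdd u v Δ
  if gp % 4 = 2 then
    (gapCount Δ' gp - gapCount Δ' (gp+4)) - (gapCount Δ' (gp+n) - gapCount Δ' (gp+4+n))
  else gapCount Δ' gp - gapCount Δ' (gp+4)


/-!
Every `n > g` is an order of `𝓜₀`: gaps by assumption, elements of `Γ` by multiplication with an
element of `𝓜₀` of order `0`. Removing leading terms one at a time pushes any series of order `> g`
into `z^c𝒪 ⊆ 𝓜₀`, so `𝓜₀` contains every series of order `> g`. Now write `r ∈ ℛ` as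
`r = r(0) + (r - r(0))`: the second summand moves `h` into `𝓜₀`, whence `𝓜₀ + ℛh = 𝓜₀ + ℂh`.
Finally `g` is not an order of `𝓜₀`, so the leading terms do not cancel in `m + a h` with `m ∈ 𝓜₀`
and `a ∈ ℂ`, and `g` is the only new order.
-/

section Order

variable {k : Type*}

theorem X_pow_dvd_iff_le_order [Semiring k] {f : k⟦X⟧} {n : ℕ} :
    X ^ n ∣ f ↔ n ≤ f.order := by
  rw [order_eq_emultiplicity_X, pow_dvd_iff_le_emultiplicity]

theorem order_smul_of_ne_zero [Semiring k] [NoZeroDivisors k] {a : k} (ha : a ≠ 0) (f : k⟦X⟧) :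
    (a • f).order = f.order := by
  refine le_antisymm (le_order f _ fun i hi => ?_) le_order_smul
  have hcoeff : a * coeff i f = 0 := by simpa using coeff_of_lt_order i hi
  exact (mul_eq_zero.mp hcoeff).resolve_left ha

theorem order_add_one_le_order_sub_C_mul [Ring k] (r f : k⟦X⟧) :
    f.order + 1 ≤ ((r - C (constantCoeff r)) * f).order := by
  have hr : 1 ≤ (r - C (constantCoeff r)).order :=
    one_le_order_iff_constCoeff_eq_zero.mpr (by simp)
  calc f.order + 1 ≤ f.order + (r - C (constantCoeff r)).order := by gcongr
    _ = (r - C (constantCoeff r)).order + f.order := add_comm _ _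
    _ ≤ ((r - C (constantCoeff r)) * f).order := le_order_mul _ _

theorem exists_succ_le_order_sub_smul [DivisionRing k] {f x : k⟦X⟧} {n : ℕ}
    (hf : n ≤ f.order) (hx : x.order = n) : ∃ a : k, (n + 1 : ℕ) ≤ (f - a • x).order := by
  obtain ⟨hxn, hx_lt⟩ := order_eq_nat.mp hx
  refine ⟨coeff n f / coeff n x, nat_le_order _ _ fun i hi => ?_⟩
  obtain hin | rfl := Nat.lt_succ_iff_lt_or_eq.mp hi
  · have hfi : coeff i f = 0 := coeff_of_lt_order i (lt_of_lt_of_le (mod_cast hin) hf)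
    simp [hfi, hx_lt i hin]
  · simp [hxn]

end Order

/-- The set of orders of the nonzero elements of `S`: this is `Γ` for `S = ℛ` and `Δ_𝓜` for
`S = 𝓜`. The zero series is excluded automatically, since its order is `⊤`. -/
def orderSet {k : Type*} [Semiring k] (S : Set k⟦X⟧) : Set ℕ := {n | ∃ x ∈ S, x.order = n}

section Subspace

variable {k : Type*} [DivisionRing k] {V : Submodule k k⟦X⟧}

theorem mem_of_le_order_of_forall_mem_orderSet {m N : ℕ}
    (hN : ∀ f : k⟦X⟧, N ≤ f.order → f ∈ V) (hm : ∀ n, m ≤ n → n ∈ orderSet (V : Set k⟦X⟧))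
    {f : k⟦X⟧} (hf : m ≤ f.order) : f ∈ V := by
  obtain hNm | hmN := le_total N m
  · exact hN f ((Nat.cast_le.mpr hNm).trans hf)
  · revert f
    refine Nat.decreasingInduction' (P := fun n => ∀ {f : k⟦X⟧}, n ≤ f.order → f ∈ V)
      (fun n _ hmn ih f hf => ?_) hmN (hN _)
    obtain ⟨x, hxV, hx⟩ := hm n hmn
    obtain ⟨a, ha⟩ := exists_succ_le_order_sub_smul hf hx
    exact (V.sub_mem_iff_left (V.smul_mem a hxV)).mp (ih ha)

theorem orderSet_sup_span_singleton {h : k⟦X⟧} {g : ℕ} (hh : h.order = g)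
    (hg : g ∉ orderSet (V : Set k⟦X⟧)) :
    orderSet ((V ⊔ k ∙ h : Submodule k k⟦X⟧) : Set k⟦X⟧) = orderSet (V : Set k⟦X⟧) ∪ {g} := by
  ext n
  constructor
  · rintro ⟨x, hx, hxn⟩
    obtain ⟨v, hv, y, hy, rfl⟩ := Submodule.mem_sup.mp hx
    obtain ⟨a, rfl⟩ := Submodule.mem_span_singleton.mp hy
    obtain rfl | ha := eq_or_ne a 0
    · exact Or.inl ⟨v, hv, by simpa using hxn⟩
    · have hah : (a • h).order = g := (order_smul_of_ne_zero ha h).trans hh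
      have hne : v.order ≠ (a • h).order := fun hvg => hg ⟨v, hv, hvg.trans hah⟩
      rw [order_add_of_order_ne v _ hne, hah] at hxn
      obtain hmin | hmin := min_choice v.order g
      · exact Or.inl ⟨v, hv, hmin.symm.trans hxn⟩
      · exact Or.inr (Nat.cast_inj.mp (hxn.symm.trans hmin))
  · rintro (⟨x, hx, hxn⟩ | rfl)
    · exact ⟨x, Submodule.mem_sup_left hx, hxn⟩
    · exact ⟨h, Submodule.mem_sup_right (Submodule.mem_span_singleton_self h), hh⟩

end Subspace

theorem restrictScalars_sup_span_singleton {k : Type*} [CommRing k] {R : Subalgebra k k⟦X⟧}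
    {M : Submodule R k⟦X⟧} {h : k⟦X⟧} (hM : ∀ f : k⟦X⟧, h.order + 1 ≤ f.order → f ∈ M) :
    (M ⊔ Submodule.span R {h}).restrictScalars k = M.restrictScalars k ⊔ k ∙ h := by
  refine le_antisymm (fun x hx => ?_) (sup_le (fun x hx => Submodule.mem_sup_left (S := M) hx) ?_)
  · obtain ⟨m, hm, y, hy, rfl⟩ := Submodule.mem_sup.mp ((Submodule.restrictScalars_mem k _ _).mp hx)
    obtain ⟨r, rfl⟩ := Submodule.mem_span_singleton.mp hy
    set a : k := constantCoeff (r : k⟦X⟧)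
    have hra : ((r : k⟦X⟧) - C a) * h ∈ M := hM _ (order_add_one_le_order_sub_C_mul _ _)
    refine Submodule.mem_sup.mpr ⟨m + (r - C a) * h, M.add_mem hm hra, a • h,
      Submodule.smul_mem _ a (Submodule.mem_span_singleton_self h), ?_⟩
    rw [Subalgebra.smul_def, smul_eq_mul, smul_eq_C_mul]
    ring
  · rw [Submodule.span_singleton_le_iff_mem]
    exact Submodule.mem_sup_right (S := M) (Submodule.mem_span_singleton_self h)

theorem orderSet_subset_of_zero_mem {k : Type*} [CommSemiring k] [NoZeroDivisors k]
    {R : Subalgebra k k⟦X⟧} {M : Submodule R k⟦X⟧} (h0 : 0 ∈ orderSet (M : Set k⟦X⟧)) :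
    orderSet (R : Set k⟦X⟧) ⊆ orderSet (M : Set k⟦X⟧) := by
  rintro n ⟨r, hr, hrn⟩
  obtain ⟨x, hx, hx0⟩ := h0
  exact ⟨r * x, M.smul_mem ⟨r, hr⟩ hx, by simp [order_mul, hrn, hx0]⟩

section Module

variable {k : Type*} [Field k] {R : Subalgebra k k⟦X⟧} {M : Submodule R k⟦X⟧}

theorem mem_of_conductor_le_order {c : ℕ} (hc : ∀ f : k⟦X⟧, X ^ c * f ∈ R)
    (h0 : 0 ∈ orderSet (M : Set k⟦X⟧)) {f : k⟦X⟧} (hf : c ≤ f.order) : f ∈ M := by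
  obtain ⟨x, hx, hx0⟩ := h0
  obtain ⟨q, rfl⟩ := X_pow_dvd_iff_le_order.mpr hf
  have hx_inv : x⁻¹ * x = 1 :=
    PowerSeries.inv_mul_cancel x (by simpa using (order_eq_nat.mp hx0).1)
  have hmem : X ^ c * (q * x⁻¹) * x ∈ M := M.smul_mem ⟨_, hc (q * x⁻¹)⟩ hx
  rwa [mul_assoc, mul_assoc, hx_inv, mul_one] at hmem

theorem statement12_general {c : ℕ} (hc : ∀ f : k⟦X⟧, X ^ c * f ∈ R)
    (h0 : 0 ∈ orderSet (M : Set k⟦X⟧)) {g : ℕ} (hg : g ∉ orderSet (M : Set k⟦X⟧))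
    (habove : ∀ n, g < n → n ∉ orderSet (R : Set k⟦X⟧) → n ∈ orderSet (M : Set k⟦X⟧))
    {h : k⟦X⟧} (hh : h.order = g) :
    (M ⊔ Submodule.span R {h}).restrictScalars k = M.restrictScalars k ⊔ k ∙ h ∧ h ∉ M ∧
      orderSet ((M ⊔ Submodule.span R {h} : Submodule R k⟦X⟧) : Set k⟦X⟧) =
        orderSet (M : Set k⟦X⟧) ∪ {g} := by
  have hmem_above (n : ℕ) (hn : g + 1 ≤ n) : n ∈ orderSet (M : Set k⟦X⟧) := by
    by_cases hnR : n ∈ orderSet (R : Set k⟦X⟧)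
    · exact orderSet_subset_of_zero_mem h0 hnR
    · exact habove n hn hnR
  have htail (f : k⟦X⟧) (hf : h.order + 1 ≤ f.order) : f ∈ M :=
    mem_of_le_order_of_forall_mem_orderSet (V := M.restrictScalars k)
      (fun _ => mem_of_conductor_le_order hc h0) hmem_above (by simpa [hh] using hf)
  have hsup := restrictScalars_sup_span_singleton htail
  refine ⟨hsup, fun hhM => hg ⟨h, hhM, hh⟩, ?_⟩
  rw [← Submodule.coe_restrictScalars k, hsup]
  exact orderSet_sup_span_singleton hh hg

end Module

section Complex

variable {R : Subalgebra ℂ 𝒪} {M N : Submodule R 𝒪}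

theorem order_eq_natCast_iff {f : 𝒪} {n : ℕ} : f.order = n ↔ f ≠ 0 ∧ ord f = n := by
  constructor
  · intro hf
    obtain ⟨hn, hlt⟩ := order_eq_nat.mp hf
    have hleast : IsLeast {m : ℕ | coeff m f ≠ 0} n :=
      ⟨hn, fun m hm => not_lt.mp fun hmn => hm (hlt m hmn)⟩
    exact ⟨exists_coeff_ne_zero_iff_ne_zero.mp ⟨n, hn⟩, hleast.csInf_eq⟩
  · rintro ⟨hf, rfl⟩
    exact order_eq_nat.mpr ⟨Nat.sInf_mem (exists_coeff_ne_zero_iff_ne_zero.mpr hf),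
      fun _ hi => not_not.mp (Nat.notMem_of_lt_sInf hi)⟩

theorem sGamma_eq_orderSet (R : Subalgebra ℂ 𝒪) : SGamma R = orderSet (R : Set 𝒪) := by
  simp only [SGamma, orderSet, order_eq_natCast_iff, SetLike.mem_coe]

theorem deltaM_eq_orderSet (M : Submodule R 𝒪) : DeltaM R M = orderSet (M : Set 𝒪) := by
  simp only [DeltaM, orderSet, order_eq_natCast_iff, SetLike.mem_coe]

theorem IsStd.sup (hM : IsStd R M) (hN : N.FG) : IsStd R (M ⊔ N) := by
  obtain ⟨hfg, x, hx, hx0⟩ := hM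
  exact ⟨hfg.sup hN, x, Submodule.mem_sup_left hx, hx0⟩

theorem dset_eq_union_singleton {g : ℕ} (hg : g ∈ Gaps R)
    (hΔ : DeltaM R N = DeltaM R M ∪ {g}) : Dset R N = Dset R M ∪ {g} := by
  rw [Dset, Dset, hΔ, Set.union_inter_distrib_right,
    Set.inter_eq_left.mpr (Set.singleton_subset_iff.mpr hg)]

end Complex

/-- If `g` is a gap not in `D_{𝓜_0}` such that every larger gap lies in
`D_{𝓜_0}`, then for every `h ∈ 𝒪` with `ν(h) = g` the module
`𝓜_1 = 𝓜_0 + ℛh` equals `𝓜_0 ⊕ ℂh` and is a standard module with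
`Δ_{𝓜_1} = Δ_{𝓜_0} ∪ {g}`, i.e. `D_{𝓜_1} = D_{𝓜_0} ∪ {g}`. -/
theorem statement12 (R : Subalgebra ℂ 𝒪) (c : ℕ) (hR : HasConductor R c)
    (M0 : Submodule ↥R 𝒪) (hstd : IsStd R M0)
    (gp : ℕ) (hg : gp ∈ Gaps R) (hgD : gp ∉ Dset R M0)
    (habove : ∀ g' ∈ Gaps R, gp < g' → g' ∈ Dset R M0) :
    ∀ h : 𝒪, h ≠ 0 → ord h = gp →
      ((M0 ⊔ Submodule.span ↥R {h}).restrictScalars ℂ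
          = M0.restrictScalars ℂ ⊔ (ℂ ∙ h)) ∧
      h ∉ M0 ∧
      IsStd R (M0 ⊔ Submodule.span ↥R {h}) ∧
      DeltaM R (M0 ⊔ Submodule.span ↥R {h}) = DeltaM R M0 ∪ {gp} ∧
      Dset R (M0 ⊔ Submodule.span ↥R {h}) = Dset R M0 ∪ {gp} := by
  intro h h_ne hh
  have hgeneral := statement12_general (M := M0) (g := gp) (h := h) hR.2.1
  simp only [← sGamma_eq_orderSet, ← deltaM_eq_orderSet] at hgeneral
  obtain ⟨hsup, hmem, hΔ⟩ := hgeneral hstd.2 (fun hgΔ => hgD ⟨hgΔ, hg⟩)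
    (fun n hn hnΓ => (habove n hnΓ hn).1) (order_eq_natCast_iff.mpr ⟨h_ne, hh⟩)
  exact ⟨hsup, hmem, hstd.sup (Submodule.fg_span_singleton h), hΔ, dset_eq_union_singleton hg hΔ⟩

end
end

section
/- Let ℛ = ℂ[z^4, z^6+z^7] + z^{16}ℂ⟦z⟧, whose value semigroup is Γ = ⟨4,6,13⟩ with gap set G = {1,2,3,5,7,9,11,15}. Let D ⊆ G be such that Γ∪D is a Γ-module. Then there exists a standard module 𝓜 with D_𝓜 = D if and only if D ≠ {2,15} and D ≠ {2,11,15}; in particular, the two sets of added gaps {2,15} and {2,11,15} do not come from any module. -/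
open PowerSeries

noncomputable section

/-!
Put `a = z⁴` and `b = z⁶ + z⁷`. If a module contains `u` of order `0` and `f` of order `2`, two
syzygies between `a f, b u` and `b f, a² u` have coefficients at `z⁷` and `z⁹` that differ by
`2 u₀ f₂ ≠ 0`, so `7` or `9` is an added gap. Among the `Γ`-modules `Γ ∪ D`, only
`D = {2, 15}` and `D = {2, 11, 15}` contain `2` but neither `7` nor `9`.

Conversely, choose `x_n = zⁿ + t_n zⁿ⁺¹` for each `n ∈ Γ ∪ D`. For the right second coefficients
`t_n` the span of these elements and of `z¹⁶ ℂ⟦z⟧` is stable under `a` and `b`, and its set of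
orders is `Γ ∪ D` since the `x_n` have distinct orders. Only the coefficient `t₂` depends on `D`:
`a x₂ = b + (t₂ - 1) z⁷` forces `t₂ = 1` if `7` is not available, and
`b x₂ = z⁸ + (1 + t₂) z⁹ + t₂ z¹⁰` then asks for `9`.
-/

section ValueSet

variable {K : Type*} [Field K]

/-- The set of (finite) orders of the elements of a subspace of `K⟦X⟧`; for a subalgebra of `𝒪`
this is its value semigroup, for a module `𝓜 ⊆ 𝒪` it is `Δ_𝓜`. -/
def valueSet (V : Submodule K K⟦X⟧) : Set ℕ := {n | ∃ f ∈ V, f.order = n}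

lemma mem_valueSet_of_coeff {V : Submodule K K⟦X⟧} {f : K⟦X⟧} {n : ℕ} (hf : f ∈ V)
    (hn : coeff n f ≠ 0) (hlt : ∀ m < n, coeff m f = 0) : n ∈ valueSet V :=
  ⟨f, hf, order_eq_nat.2 ⟨hn, hlt⟩⟩

lemma valueSet_mono {V W : Submodule K K⟦X⟧} (h : V ≤ W) : valueSet V ⊆ valueSet W :=
  fun _ ⟨f, hf, hn⟩ => ⟨f, h hf, hn⟩

lemma order_smul_of_ne_zero_s17 {c : K} (hc : c ≠ 0) (f : K⟦X⟧) : (c • f).order = f.order := by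
  rw [smul_eq_C_mul, order_mul, order_zero_of_unit (hc.isUnit.map C), zero_add]

lemma valueSet_span_singleton_sup {V : Submodule K K⟦X⟧} {x : K⟦X⟧} {n : ℕ} (hx : x.order = n)
    (hn : n ∉ valueSet V) : valueSet (K ∙ x ⊔ V) = insert n (valueSet V) := by
  apply subset_antisymm
  · rintro m ⟨f, hf, hm⟩
    obtain ⟨_, hy, g, hg, rfl⟩ := Submodule.mem_sup.1 hf
    obtain ⟨c, rfl⟩ := Submodule.mem_span_singleton.1 hy
    obtain rfl | hc := eq_or_ne c 0
    · exact Or.inr ⟨g, hg, by rwa [zero_smul, zero_add] at hm⟩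
    have hcx : (c • x).order = n := (order_smul_of_ne_zero_s17 hc x).trans hx
    have hne : (c • x).order ≠ g.order := fun h => hn ⟨g, hg, h ▸ hcx⟩
    rw [order_add_of_order_ne _ _ hne, hcx] at hm
    obtain h | h := min_choice (n : ℕ∞) g.order <;> rw [h] at hm
    · exact Or.inl (Nat.cast_inj.1 hm).symm
    · exact Or.inr ⟨g, hg, hm⟩
  · refine Set.insert_subset ⟨x, ?_, hx⟩ (valueSet_mono le_sup_right)
    exact Submodule.mem_sup_left (Submodule.mem_span_singleton_self x)

lemma valueSet_span_X_pow (N : ℕ) :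
    valueSet ((Ideal.span {(X : K⟦X⟧) ^ N}).restrictScalars K) = Set.Ici N := by
  ext n
  constructor
  · rintro ⟨f, hf, hn⟩
    by_contra! h
    have hdvd : X ^ N ∣ f := Ideal.mem_span_singleton.1 hf
    exact (order_eq_nat.1 hn).1 (X_pow_dvd_iff.1 hdvd n (not_le.1 h))
  · exact fun h => ⟨X ^ n, Ideal.mem_span_singleton.2 (pow_dvd_pow X h), order_X_pow n⟩

lemma valueSet_span_image_sup_span_X_pow {x : ℕ → K⟦X⟧} (hx : ∀ n, (x n).order = n) {N : ℕ}
    {s : Set ℕ} (hs : s ⊆ Set.Iio N) :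
    valueSet (Submodule.span K (x '' s) ⊔ (Ideal.span {(X : K⟦X⟧) ^ N}).restrictScalars K) =
      s ∪ Set.Ici N := by
  induction s, (Set.finite_Iio N).subset hs using Set.Finite.induction_on with
  | empty => simp only [Set.image_empty, Submodule.span_empty, bot_sup_eq, Set.empty_union,
      valueSet_span_X_pow]
  | @insert n s hn _ ih =>
    obtain ⟨hnN, hsN⟩ := Set.insert_subset_iff.1 hs
    have hmem : n ∉ s ∪ Set.Ici N := fun h => h.elim hn (Set.mem_Iio.1 hnN).not_ge
    rw [← ih hsN] at hmem
    rw [Set.image_insert_eq, Submodule.span_insert, sup_assoc,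
      valueSet_span_singleton_sup (hx n) hmem, ih hsN, Set.insert_union]

/-- If `u = u₀ + ⋯` and `f = f₂ z² + ⋯`, the combinations `u₀ z⁴ f - f₂ (z⁶ + z⁷) u` and
`u₀ (z⁶ + z⁷) f - f₂ z⁸ u` cancel the leading terms; the next coefficients, at `z⁷` and `z⁹`,
differ by `2 u₀ f₂`, so they cannot both vanish. -/
lemma seven_or_nine_mem_valueSet [NeZero (2 : K)] {V : Submodule K K⟦X⟧}
    (hV₄ : ∀ f ∈ V, X ^ 4 * f ∈ V) (hV₆ : ∀ f ∈ V, (X ^ 6 + X ^ 7) * f ∈ V)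
    (h0 : 0 ∈ valueSet V) (h2 : 2 ∈ valueSet V) : 7 ∈ valueSet V ∨ 9 ∈ valueSet V := by
  obtain ⟨u, hu, hu_ord⟩ := h0
  obtain ⟨f, hf, hf_ord⟩ := h2
  obtain ⟨hu0, -⟩ := order_eq_nat.1 hu_ord
  obtain ⟨hf2, hf_lt⟩ := order_eq_nat.1 hf_ord
  have hf0 : constantCoeff f = 0 := by simpa using hf_lt 0 (by norm_num)
  have hf1 : coeff 1 f = 0 := hf_lt 1 (by norm_num)
  by_contra! hcon
  have h7 : coeff 0 u * coeff 3 f - coeff 2 f * (coeff 1 u + coeff 0 u) = 0 := by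
    by_contra hne
    refine hcon.1 (mem_valueSet_of_coeff
      (sub_mem (V.smul_mem (coeff 0 u) (hV₄ f hf)) (V.smul_mem (coeff 2 f) (hV₆ u hu)))
      (by simpa [add_mul, mul_add, coeff_X_pow_mul'] using hne) fun m hm => ?_)
    interval_cases m <;>
      simp [add_mul, coeff_X_pow_mul', hf0, hf1, mul_comm (coeff 2 f) (constantCoeff u)]
  have h9 : coeff 0 u * (coeff 3 f + coeff 2 f) - coeff 2 f * coeff 1 u = 0 := by
    by_contra hne
    refine hcon.2 (mem_valueSet_of_coeff
      (sub_mem (V.smul_mem (coeff 0 u) (hV₆ f hf)) (V.smul_mem (coeff 2 f) (hV₄ _ (hV₄ u hu))))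
      (by simpa [add_mul, mul_add, coeff_X_pow_mul'] using hne) fun m hm => ?_)
    interval_cases m <;>
      simp [add_mul, coeff_X_pow_mul', hf0, hf1, mul_comm (coeff 2 f) (constantCoeff u)]
  have hprod : 2 * (coeff 0 u * coeff 2 f) = 0 := by linear_combination h9 - h7
  exact mul_ne_zero two_ne_zero (mul_ne_zero hu0 hf2) hprod

end ValueSet

section StandardBasis

variable {K : Type*} [Field K]

/-- The explicit gap set of `⟨4, 6, 13⟩`. -/
def gapSet : Set ℕ := {1, 2, 3, 5, 7, 9, 11, 15}

/-- The second coefficient of the standard basis element of order `n`. Writing `a = z⁴` and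
`b = z⁶ + z⁷`, the values at `6, 10, 14` come from `b, ab, a²b`, the value at `13` from
`(b² - a³) / 2`, and the value at `9` makes `a` carry the element of order `9` to that of
order `13`. The coefficient `p` at `2` is a free parameter. -/
def tailCoeff (p : K) : ℕ → K
  | 2 => p
  | 6 => 1
  | 9 => 1 / 2
  | 10 => 1
  | 13 => 1 / 2
  | 14 => 1
  | _ => 0

/-- The standard basis element of order `n`. -/
def stdElt (p : K) (n : ℕ) : K⟦X⟧ := X ^ n + tailCoeff p n • X ^ (n + 1)

lemma order_stdElt (p : K) (n : ℕ) : (stdElt p n).order = n := by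
  refine order_eq_nat.2 ⟨by simp [stdElt, coeff_X_pow], fun m hm => ?_⟩
  simp [stdElt, coeff_X_pow, hm.ne, (hm.trans n.lt_succ_self).ne]

/-- The subspace spanned by the standard basis elements with order in `Δ`, truncated at the
conductor `16`: everything of order at least `16` is included. -/
def stdSubspace (p : K) (Δ : Set ℕ) : Submodule K K⟦X⟧ :=
  Submodule.span K (stdElt p '' (Δ ∩ Set.Iio 16)) ⊔
    (Ideal.span {(X : K⟦X⟧) ^ 16}).restrictScalars K

lemma mem_stdSubspace_of_X_pow_dvd (p : K) (Δ : Set ℕ) {f : K⟦X⟧} (h : X ^ 16 ∣ f) :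
    f ∈ stdSubspace p Δ :=
  Submodule.mem_sup_right (Ideal.mem_span_singleton.2 h)

lemma stdElt_mem_stdSubspace (p : K) {Δ : Set ℕ} {n : ℕ} (hn : n ∈ Δ) :
    stdElt p n ∈ stdSubspace p Δ := by
  obtain h | h := lt_or_ge n 16
  · exact Submodule.mem_sup_left (Submodule.subset_span ⟨n, ⟨hn, h⟩, rfl⟩)
  · apply mem_stdSubspace_of_X_pow_dvd
    exact dvd_add (pow_dvd_pow X h) (dvd_smul_of_dvd _ (pow_dvd_pow X (Nat.le_succ_of_le h)))

lemma X_pow_mem_stdSubspace (p : K) {Δ : Set ℕ} {n : ℕ} (hn : n ∈ Δ)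
    (h : tailCoeff p n = 0 ∨ X ^ (n + 1) ∈ stdSubspace p Δ) : X ^ n ∈ stdSubspace p Δ := by
  have key : X ^ n = stdElt p n - tailCoeff p n • X ^ (n + 1) := by simp [stdElt]
  rw [key]
  refine sub_mem (stdElt_mem_stdSubspace p hn) ?_
  obtain h | h := h
  · simp [h]
  · exact Submodule.smul_mem _ _ h

/-- The conditions under which `stdSubspace p Δ` is stable under `z⁴` and `z⁶ + z⁷`: `Δ` contains
`⟨4, 6, 13⟩` and is closed under adding `4` and `6`, and `p` is chosen so that the multiples
`z⁴ x₂ = z⁶ + p z⁷` and `(z⁶ + z⁷) x₂ = z⁸ + (1 + p) z⁹ + p z¹⁰` of `x₂ = z² + p z³` lie in the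
subspace. -/
structure Compatible (p : K) (Δ : Set ℕ) : Prop where
  compl_gapSet_subset : gapSetᶜ ⊆ Δ
  add_four {n : ℕ} : n ∈ Δ → n + 4 ∈ Δ
  add_six {n : ℕ} : n ∈ Δ → n + 6 ∈ Δ
  of_two_mem : 2 ∈ Δ → p = 1 ∧ 9 ∈ Δ ∨ p = -1 ∧ 7 ∈ Δ

lemma compatible_compl_gapSet (p : K) : Compatible p gapSetᶜ where
  compl_gapSet_subset := subset_rfl
  add_four {n} := by simp only [gapSet, Set.mem_compl_iff, Set.mem_insert_iff,
    Set.mem_singleton_iff]; omega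
  add_six {n} := by simp only [gapSet, Set.mem_compl_iff, Set.mem_insert_iff,
    Set.mem_singleton_iff]; omega
  of_two_mem h := absurd (by simp [gapSet]) h

namespace Compatible

variable {p : K} {Δ : Set ℕ}

lemma valueSet_stdSubspace (h : Compatible p Δ) : valueSet (stdSubspace p Δ) = Δ := by
  rw [stdSubspace, valueSet_span_image_sup_span_X_pow (order_stdElt p) Set.inter_subset_right,
    Set.inter_union_distrib_right, Set.Iio_union_Ici, Set.inter_univ, Set.union_eq_left]
  refine subset_trans (fun n hn => ?_) h.compl_gapSet_subset
  simp only [gapSet, Set.mem_compl_iff, Set.mem_insert_iff, Set.mem_singleton_iff,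
    Set.mem_Ici] at hn ⊢
  omega

lemma X_pow_ten_mem (h : Compatible p Δ) (h11 : 11 ∈ Δ) : X ^ 10 ∈ stdSubspace p Δ :=
  X_pow_mem_stdSubspace p (h.compl_gapSet_subset (by simp [gapSet]))
    (Or.inr (X_pow_mem_stdSubspace p h11 (Or.inl rfl)))

lemma X_pow_four_mul_stdElt_mem (h : Compatible p Δ) {n : ℕ} (hn : n ∈ Δ) (hlt : n < 16) :
    X ^ 4 * stdElt p n ∈ stdSubspace p Δ := by
  have key : X ^ 4 * stdElt p n =
      stdElt p (n + 4) + (tailCoeff p n - tailCoeff p (n + 4)) • X ^ (n + 5) := by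
    simp only [stdElt, smul_eq_C_mul, map_sub]
    ring
  rw [key]
  refine add_mem (stdElt_mem_stdSubspace p (h.add_four hn)) ?_
  by_cases htail : tailCoeff p n = tailCoeff p (n + 4)
  · simp [htail]
  refine Submodule.smul_mem _ _ ?_
  have hn25 : n = 2 ∨ n = 5 ∨ 11 ≤ n := by
    interval_cases n <;> simp_all [tailCoeff]
  obtain rfl | rfl | h11 := hn25
  · obtain ⟨rfl, -⟩ | ⟨-, h7⟩ := h.of_two_mem hn
    · exact absurd rfl htail
    · exact X_pow_mem_stdSubspace p h7 (Or.inl rfl)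
  · exact h.X_pow_ten_mem (h.add_six hn)
  · exact mem_stdSubspace_of_X_pow_dvd p Δ (pow_dvd_pow X (by omega))

lemma X_pow_fourteen_mem (h : Compatible p Δ) (h15 : 15 ∈ Δ) : X ^ 14 ∈ stdSubspace p Δ :=
  X_pow_mem_stdSubspace p (h.compl_gapSet_subset (by simp [gapSet]))
    (Or.inr (X_pow_mem_stdSubspace p h15 (Or.inl rfl)))

lemma one_add_smul_X_pow_nine_add_mem [NeZero (2 : K)] (h : Compatible p Δ) (h2 : 2 ∈ Δ) :
    (1 + p) • X ^ 9 + p • X ^ 10 ∈ stdSubspace p Δ := by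
  obtain ⟨rfl, h9⟩ | ⟨rfl, h7⟩ := h.of_two_mem h2
  · have key : (1 + 1 : K) • (X : K⟦X⟧) ^ 9 + (1 : K) • X ^ 10 = (2 : K) • stdElt 1 9 := by
      simp [stdElt, tailCoeff, smul_smul, one_add_one_eq_two, mul_inv_cancel₀ (two_ne_zero' K)]
    rw [key]
    exact Submodule.smul_mem _ _ (stdElt_mem_stdSubspace 1 h9)
  · rw [add_neg_cancel, zero_smul, zero_add]
    exact Submodule.smul_mem _ _ (h.X_pow_ten_mem (h.add_four h7))

lemma two_smul_X_pow_thirteen_add_mem [NeZero (2 : K)] (h : Compatible p Δ) :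
    (2 : K) • X ^ 13 + X ^ 14 ∈ stdSubspace p Δ := by
  have key : (2 : K) • X ^ 13 + X ^ 14 = (2 : K) • stdElt p 13 := by
    simp [stdElt, tailCoeff, smul_smul, mul_inv_cancel₀ (two_ne_zero' K)]
  rw [key]
  exact Submodule.smul_mem _ _
    (stdElt_mem_stdSubspace p (h.compl_gapSet_subset (by simp [gapSet])))

lemma X_pow_add_seven_mem (h : Compatible p Δ) {n : ℕ} (hn : n ∈ Δ)
    (hodd : n = 1 ∨ n = 3 ∨ n = 5 ∨ n = 7) : X ^ (n + 7) ∈ stdSubspace p Δ := by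
  obtain rfl | rfl | rfl | rfl := hodd
  · exact X_pow_mem_stdSubspace p (h.compl_gapSet_subset (by simp [gapSet])) (Or.inl rfl)
  · exact h.X_pow_ten_mem (h.add_four (h.add_four hn))
  · exact X_pow_mem_stdSubspace p (h.compl_gapSet_subset (by simp [gapSet])) (Or.inl rfl)
  · exact h.X_pow_fourteen_mem (h.add_four (h.add_four hn))

lemma X_pow_six_add_mul_stdElt_mem [NeZero (2 : K)] (h : Compatible p Δ) {n : ℕ} (hn : n ∈ Δ)
    (hlt : n < 16) : (X ^ 6 + X ^ 7) * stdElt p n ∈ stdSubspace p Δ := by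
  have key : (X ^ 6 + X ^ 7) * stdElt p n = stdElt p (n + 6) +
      ((1 + tailCoeff p n - tailCoeff p (n + 6)) • X ^ (n + 7) + tailCoeff p n • X ^ (n + 8)) := by
    simp only [stdElt, smul_eq_C_mul, map_sub, map_add, map_one]
    ring
  rw [key]
  refine add_mem (stdElt_mem_stdSubspace p (h.add_six hn)) ?_
  have hcases : (n = 1 ∨ n = 3 ∨ n = 5 ∨ n = 7) ∨ n = 2 ∨ n = 6 ∨ 9 ≤ n ∨
      1 + tailCoeff p n - tailCoeff p (n + 6) = 0 ∧ tailCoeff p n = 0 := by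
    interval_cases n <;> simp [tailCoeff]
  obtain hodd | rfl | rfl | h9 | ⟨h1, h2⟩ := hcases
  · have htail : tailCoeff p n = 0 := by obtain rfl | rfl | rfl | rfl := hodd <;> rfl
    rw [htail, zero_smul, add_zero]
    exact Submodule.smul_mem _ _ (h.X_pow_add_seven_mem hn hodd)
  · simpa [tailCoeff] using h.one_add_smul_X_pow_nine_add_mem hn
  · simpa [tailCoeff, one_add_one_eq_two] using h.two_smul_X_pow_thirteen_add_mem
  · exact add_mem
      (Submodule.smul_mem _ _ (mem_stdSubspace_of_X_pow_dvd p Δ (pow_dvd_pow X (by omega))))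
      (Submodule.smul_mem _ _ (mem_stdSubspace_of_X_pow_dvd p Δ (pow_dvd_pow X (by omega))))
  · rw [h1, h2, zero_smul, zero_smul, add_zero]
    exact zero_mem _

end Compatible

lemma mul_mem_stdSubspace {p : K} {Δ : Set ℕ} {a f : K⟦X⟧}
    (ha : ∀ n ∈ Δ, n < 16 → a * stdElt p n ∈ stdSubspace p Δ) (hf : f ∈ stdSubspace p Δ) :
    a * f ∈ stdSubspace p Δ := by
  suffices h : stdSubspace p Δ ≤ (stdSubspace p Δ).comap (LinearMap.mulLeft K a) from h hf
  refine sup_le (Submodule.span_le.2 ?_) fun g hg => ?_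
  · rintro _ ⟨n, ⟨hn, hlt⟩, rfl⟩
    exact ha n hn hlt
  · exact mem_stdSubspace_of_X_pow_dvd p Δ ((Ideal.mem_span_singleton.1 hg).mul_left a)

end StandardBasis

section Ring

lemma ne_zero_and_ord_eq_iff {f : 𝒪} {n : ℕ} : f ≠ 0 ∧ ord f = n ↔ f.order = n := by
  have hord (hf : f ≠ 0) : ord f = f.order.toNat := by
    have hmem : f.order.toNat ∈ {n : ℕ | coeff n f ≠ 0} := coeff_order hf
    refine le_antisymm (Nat.sInf_le hmem) (not_lt.1 fun hlt => ?_)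
    exact Nat.sInf_mem ⟨_, hmem⟩ (coeff_of_lt_order_toNat _ hlt)
  constructor
  · rintro ⟨hf, rfl⟩
    rw [hord hf, coe_toNat_order hf]
  · intro h
    have hf : f ≠ 0 := by rintro rfl; simp at h
    exact ⟨hf, by rw [hord hf, h, ENat.toNat_natCast]⟩

lemma SGamma_eq_valueSet (R : Subalgebra ℂ 𝒪) :
    SGamma R = valueSet (Subalgebra.toSubmodule R) := by
  simp only [SGamma, valueSet, ne_zero_and_ord_eq_iff, Subalgebra.mem_toSubmodule]

lemma DeltaM_eq_valueSet (R : Subalgebra ℂ 𝒪) (M : Submodule R 𝒪) :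
    DeltaM R M = valueSet (M.restrictScalars ℂ) := by
  simp only [DeltaM, valueSet, ne_zero_and_ord_eq_iff, Submodule.restrictScalars_mem]

variable {a b c N : ℕ}

lemma X_pow_mem_Rring : (X : 𝒪) ^ a ∈ Rring a b c N :=
  ⟨X ^ a, Algebra.subset_adjoin (Set.mem_insert _ _), 0, by ring⟩

lemma X_pow_add_X_pow_mem_Rring : (X : 𝒪) ^ b + X ^ c ∈ Rring a b c N :=
  ⟨X ^ b + X ^ c, Algebra.subset_adjoin (Set.mem_insert_of_mem _ rfl), 0, by ring⟩

lemma mem_Rring_of_X_pow_dvd {f : 𝒪} (h : X ^ N ∣ f) : f ∈ Rring a b c N := by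
  obtain ⟨g, rfl⟩ := h
  exact ⟨0, zero_mem _, g, by ring⟩

lemma Rring_mul_mem {V : Submodule ℂ 𝒪} (ha : ∀ f ∈ V, X ^ a * f ∈ V)
    (hbc : ∀ f ∈ V, (X ^ b + X ^ c) * f ∈ V) (hN : ∀ f : 𝒪, X ^ N ∣ f → f ∈ V)
    {r f : 𝒪} (hr : r ∈ Rring a b c N) (hf : f ∈ V) : r * f ∈ V := by
  obtain ⟨q, hq, g, rfl⟩ := hr
  rw [add_mul]
  refine add_mem ?_ (hN _ (Dvd.intro _ (mul_assoc _ _ _).symm))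
  induction hq using Algebra.adjoin_induction generalizing f with
  | mem s hs => obtain rfl | rfl := hs; exacts [ha f hf, hbc f hf]
  | algebraMap k => rw [← Algebra.smul_def]; exact V.smul_mem k hf
  | add s t _ _ hs ht => rw [add_mul]; exact add_mem (hs hf) (ht hf)
  | mul s t _ _ hs ht => rw [mul_assoc]; exact hs (ht hf)

lemma seven_or_nine_mem_DeltaM {R : Subalgebra ℂ 𝒪} (ha : (X : 𝒪) ^ 4 ∈ R)
    (hb : (X : 𝒪) ^ 6 + X ^ 7 ∈ R) {M : Submodule R 𝒪} (h0 : 0 ∈ DeltaM R M)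
    (h2 : 2 ∈ DeltaM R M) : 7 ∈ DeltaM R M ∨ 9 ∈ DeltaM R M := by
  rw [DeltaM_eq_valueSet] at h0 h2 ⊢
  exact seven_or_nine_mem_valueSet (fun _ => M.smul_mem ⟨_, ha⟩) (fun _ => M.smul_mem ⟨_, hb⟩) h0 h2

end Ring

section Modules

local notation "ℛ" => Rring 4 6 7 16

lemma Compatible.mul_mem {p : ℂ} {Δ : Set ℕ} (h : Compatible p Δ) {r f : 𝒪} (hr : r ∈ ℛ)
    (hf : f ∈ stdSubspace p Δ) : r * f ∈ stdSubspace p Δ :=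
  Rring_mul_mem
    (fun _ => mul_mem_stdSubspace fun _ => h.X_pow_four_mul_stdElt_mem)
    (fun _ => mul_mem_stdSubspace fun _ => h.X_pow_six_add_mul_stdElt_mem)
    (fun _ => mem_stdSubspace_of_X_pow_dvd p Δ) hr hf

lemma Compatible.one_mem {p : ℂ} {Δ : Set ℕ} (h : Compatible p Δ) : 1 ∈ stdSubspace p Δ := by
  simpa [stdElt, tailCoeff] using
    stdElt_mem_stdSubspace p (h.compl_gapSet_subset (by simp [gapSet] : 0 ∈ gapSetᶜ))

lemma stdElt_mem_Rring (p : ℂ) {n : ℕ} (hn : n ∉ gapSet) (hlt : n < 16) : stdElt p n ∈ ℛ := by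
  have ha : (X : 𝒪) ^ 4 ∈ ℛ := X_pow_mem_Rring
  have hb : (X : 𝒪) ^ 6 + X ^ 7 ∈ ℛ := X_pow_add_X_pow_mem_Rring
  have hcases : n = 0 ∨ n = 4 ∨ n = 6 ∨ n = 8 ∨ n = 10 ∨ n = 12 ∨ n = 13 ∨ n = 14 := by
    simp only [gapSet, Set.mem_insert_iff, Set.mem_singleton_iff] at hn
    omega
  have h13 : stdElt p 13 =
      (1 / 2 : ℂ) • ((X ^ 6 + X ^ 7) ^ 2 - (X ^ 4) ^ 3) := by
    have hsq : ((X : 𝒪) ^ 6 + X ^ 7) ^ 2 - (X ^ 4) ^ 3 = (2 : ℂ) • X ^ 13 + X ^ 14 := by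
      rw [two_smul]; ring
    rw [hsq, smul_add, smul_smul]
    simp [stdElt, tailCoeff]
  obtain rfl | rfl | rfl | rfl | rfl | rfl | rfl | rfl := hcases
  · simp [stdElt, tailCoeff]
  · simpa [stdElt, tailCoeff] using ha
  · simpa [stdElt, tailCoeff] using hb
  · simpa [stdElt, tailCoeff, ← pow_mul] using pow_mem ha 2
  · simpa [stdElt, tailCoeff, mul_add, ← pow_add] using mul_mem ha hb
  · simpa [stdElt, tailCoeff, ← pow_mul] using pow_mem ha 3
  · exact h13 ▸ Subalgebra.smul_mem _ (sub_mem (pow_mem hb 2) (pow_mem ha 3)) _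
  · simpa [stdElt, tailCoeff, mul_add, ← pow_mul, ← pow_add] using mul_mem (pow_mem ha 2) hb

lemma toSubmodule_Rring_eq_stdSubspace (p : ℂ) :
    Subalgebra.toSubmodule ℛ = stdSubspace p gapSetᶜ := by
  have hΓ := compatible_compl_gapSet p
  refine le_antisymm (fun r hr => ?_) (sup_le (Submodule.span_le.2 ?_) fun f hf => ?_)
  · simpa only [mul_one] using hΓ.mul_mem hr hΓ.one_mem
  · rintro _ ⟨n, ⟨hn, hlt⟩, rfl⟩
    exact stdElt_mem_Rring p hn hlt
  · exact mem_Rring_of_X_pow_dvd (Ideal.mem_span_singleton.1 hf)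

lemma SGamma_Rring : SGamma ℛ = gapSetᶜ := by
  rw [SGamma_eq_valueSet, toSubmodule_Rring_eq_stdSubspace 0,
    (compatible_compl_gapSet 0).valueSet_stdSubspace]

lemma Gaps_Rring : Gaps ℛ = gapSet := by
  rw [Gaps, SGamma_Rring, compl_compl]

/-- The `ℛ`-module generated by the standard basis elements with order in `Δ` below `16`. -/
def stdModule (p : ℂ) (Δ : Set ℕ) : Submodule ℛ 𝒪 :=
  Submodule.span ℛ (stdElt p '' (Δ ∩ Set.Iio 16))

lemma stdModule_fg (p : ℂ) (Δ : Set ℕ) : (stdModule p Δ).FG :=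
  Submodule.fg_span (((Set.finite_Iio 16).inter_of_right Δ).image _)

lemma Compatible.restrictScalars_stdModule {p : ℂ} {Δ : Set ℕ} (h : Compatible p Δ) :
    (stdModule p Δ).restrictScalars ℂ = stdSubspace p Δ := by
  refine le_antisymm (fun f hf => ?_) (sup_le ?_ fun f hf => ?_)
  · refine Submodule.span_induction ?_ (zero_mem _) (fun _ _ _ _ => add_mem)
      (fun r _ _ => h.mul_mem r.2) hf
    rintro _ ⟨n, ⟨hn, -⟩, rfl⟩
    exact stdElt_mem_stdSubspace p hn
  · exact Submodule.span_le_restrictScalars ℂ ℛ _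
  · have h1 : (1 : 𝒪) ∈ stdModule p Δ := by
      refine Submodule.subset_span ⟨0, ⟨h.compl_gapSet_subset (by simp [gapSet]), by simp⟩, ?_⟩
      simp [stdElt, tailCoeff]
    have hf : f ∈ ℛ := mem_Rring_of_X_pow_dvd (Ideal.mem_span_singleton.1 hf)
    simpa [Subalgebra.smul_def] using (stdModule p Δ).smul_mem ⟨f, hf⟩ h1

lemma Compatible.DeltaM_stdModule {p : ℂ} {Δ : Set ℕ} (h : Compatible p Δ) :
    DeltaM ℛ (stdModule p Δ) = Δ := by
  rw [DeltaM_eq_valueSet, h.restrictScalars_stdModule, h.valueSet_stdSubspace]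

lemma Compatible.isStd_stdModule {p : ℂ} {Δ : Set ℕ} (h : Compatible p Δ) :
    IsStd ℛ (stdModule p Δ) := by
  have h0 : 0 ∈ DeltaM ℛ (stdModule p Δ) := by
    rw [h.DeltaM_stdModule]
    exact h.compl_gapSet_subset (by simp [gapSet])
  exact ⟨stdModule_fg p Δ, h0⟩

end Modules

section AddedGaps

variable {D : Set ℕ}

lemma exists_compatible (hmod : IsGammaModule gapSetᶜ (gapSetᶜ ∪ D))
    (h2 : 2 ∈ D → 7 ∈ D ∨ 9 ∈ D) : ∃ p : ℂ, Compatible p (gapSetᶜ ∪ D) := by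
  have hadd {a n : ℕ} (ha : a ∈ gapSetᶜ) (hn : n ∈ gapSetᶜ ∪ D) : n + a ∈ gapSetᶜ ∪ D :=
    add_comm a n ▸ hmod a ha n hn
  have h2D (h : 2 ∈ gapSetᶜ ∪ D) : 2 ∈ D := h.resolve_left (by simp [gapSet])
  by_cases h7 : 7 ∈ D
  · exact ⟨-1, Set.subset_union_left, hadd (by simp [gapSet]), hadd (by simp [gapSet]),
      fun _ => Or.inr ⟨rfl, Or.inr h7⟩⟩
  · exact ⟨1, Set.subset_union_left, hadd (by simp [gapSet]), hadd (by simp [gapSet]),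
      fun h => Or.inl ⟨rfl, Or.inr ((h2 (h2D h)).resolve_left h7)⟩⟩

lemma two_mem_imp_seven_or_nine_mem_iff (hD : D ⊆ gapSet)
    (hmod : IsGammaModule gapSetᶜ (gapSetᶜ ∪ D)) :
    (2 ∈ D → 7 ∈ D ∨ 9 ∈ D) ↔ D ≠ {2, 15} ∧ D ≠ {2, 11, 15} := by
  refine ⟨fun h => ⟨?_, ?_⟩, fun ⟨hne, hne'⟩ h2 => ?_⟩
  · rintro rfl
    simp at h
  · rintro rfl
    simp at h
  by_contra! hcon
  obtain ⟨h7, h9⟩ := hcon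
  have hadd (a d : ℕ) (ha : a ∈ gapSetᶜ) (had : a + d ∈ gapSet) (hd : d ∈ D) : a + d ∈ D :=
    (hmod a ha d (Or.inr hd)).resolve_left fun h => h had
  have h15 : 15 ∈ D := hadd 13 2 (by simp [gapSet]) (by simp [gapSet]) h2
  have h1 : 1 ∉ D := fun h => h7 (hadd 6 1 (by simp [gapSet]) (by simp [gapSet]) h)
  have h3 : 3 ∉ D := fun h => h7 (hadd 4 3 (by simp [gapSet]) (by simp [gapSet]) h)
  have h5 : 5 ∉ D := fun h => h9 (hadd 4 5 (by simp [gapSet]) (by simp [gapSet]) h)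
  have hsub {n : ℕ} (hn : n ∈ D) : n = 2 ∨ n = 11 ∨ n = 15 := by
    obtain rfl | rfl | rfl | rfl | rfl | rfl | rfl | rfl := hD hn <;> simp_all
  by_cases h11 : 11 ∈ D
  · refine hne' (subset_antisymm (fun n hn => hsub hn) ?_)
    rintro _ (rfl | rfl | rfl) <;> assumption
  · refine hne (subset_antisymm (fun n hn => ?_) ?_)
    · obtain rfl | rfl | rfl := hsub hn
      exacts [Or.inl rfl, absurd hn h11, Or.inr rfl]
    · rintro _ (rfl | rfl) <;> assumption

end AddedGaps

/-- For `ℛ = ℂ[z^4, z^6+z^7] + z^{16}ℂ⟦z⟧` (value semigroup `⟨4,6,13⟩`): a set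
`D ⊆ G` with `Γ ∪ D` a `Γ`-module is the `D`-set of a standard module iff
`D ≠ {2,15}` and `D ≠ {2,11,15}`. -/
theorem statement17 (D : Set ℕ) (hD : D ⊆ Gaps (Rring 4 6 7 16))
    (hmod : IsGammaModule (SGamma (Rring 4 6 7 16)) (SGamma (Rring 4 6 7 16) ∪ D)) :
    (∃ M : Submodule ↥(Rring 4 6 7 16) 𝒪,
        IsStd (Rring 4 6 7 16) M ∧ Dset (Rring 4 6 7 16) M = D) ↔
      (D ≠ ({2, 15} : Set ℕ) ∧ D ≠ ({2, 11, 15} : Set ℕ)) := by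
  rw [Gaps_Rring] at hD
  rw [SGamma_Rring] at hmod
  rw [← two_mem_imp_seven_or_nine_mem_iff hD hmod]
  constructor
  · rintro ⟨M, hM, rfl⟩ h2
    have h79 := seven_or_nine_mem_DeltaM X_pow_mem_Rring X_pow_add_X_pow_mem_Rring hM.2 h2.1
    simpa [Dset, Gaps_Rring, gapSet] using h79
  · intro h2
    obtain ⟨p, hp⟩ := exists_compatible hmod h2
    refine ⟨stdModule p (gapSetᶜ ∪ D), hp.isStd_stdModule, ?_⟩
    rw [Dset, hp.DeltaM_stdModule, Gaps_Rring, Set.union_inter_distrib_right,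
      Set.compl_inter_self, Set.empty_union, Set.inter_eq_left.2 hD]

end
end
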